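/- Suppose in addition that det ∇²Θ ≠ 0 on Ω, and let (μ, c, λ) : ℝ² → Ω (with variables (X, T)) be a continuously differentiable map satisfying the modulated equations in parameter form: (∂_T + c ∂_X)(∇Θ ∘ (μ, c, λ)) = (∂_μΘ ∘ (μ, c, λ)) · 𝕊' · ∂_X (μ, c, λ), where 𝕊' is the (N+2)×(N+2) block matrix [[0, 1, 0],[1, 0, 0],[0, 0, −B]]. Then the fields k, α, M obtained by composing with (μ, c, λ) satisfy the conservation laws ∂_T k = −∂_X (k c), ∂_T α = ∂_X ((Θ ∘ (μ, c, λ)) − α c), and ∂_T M = −∂_X (c M + B λ). -/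

import Mathlib

open Matrix

noncomputable section

/-- The state space `ℝ × ℝ × ℝ^N` with coordinates `(μ, c, λ)`
(respectively `(k, α, M)`). -/
abbrev E (N : ℕ) : Type := ℝ × ℝ × (Fin N → ℝ)

/-- Index type for `(N+2) × (N+2)` matrices in `1 + 1 + N` block form. -/
abbrev Idx (N : ℕ) : Type := Fin 1 ⊕ Fin 1 ⊕ Fin N

/-- The standard basis of `ℝ × ℝ × ℝ^N`. -/
def basisVec (N : ℕ) : Idx N → E N :=
  Sum.elim (fun _ => (1, 0, 0))
    (Sum.elim (fun _ => (0, 1, 0)) (fun i => (0, 0, Pi.single i 1)))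

/-- The impulse `Q(M) = (1/2) M · B⁻¹ M`. -/
def Qimp (N : ℕ) (B : Matrix (Fin N) (Fin N) ℝ) (M : Fin N → ℝ) : ℝ :=
  (1/2) * (M ⬝ᵥ B⁻¹.mulVec M)

/-- Partial derivative `∂_μΘ`. -/
def dmu (N : ℕ) (Θ : E N → ℝ) (p : E N) : ℝ := fderiv ℝ Θ p (1, 0, 0)

/-- Partial derivative `∂_cΘ`. -/
def dc (N : ℕ) (Θ : E N → ℝ) (p : E N) : ℝ := fderiv ℝ Θ p (0, 1, 0)

/-- Gradient `∇_λΘ` in the `λ` variables. -/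
def gradlam (N : ℕ) (Θ : E N → ℝ) (p : E N) : Fin N → ℝ :=
  fun i => fderiv ℝ Θ p (0, 0, Pi.single i 1)

/-- Hessian matrix of a function on `ℝ × ℝ × ℝ^N` in the standard basis. -/
def hessMat (N : ℕ) (Θ : E N → ℝ) (p : E N) : Matrix (Idx N) (Idx N) ℝ :=
  Matrix.of fun i j =>
    fderiv ℝ (fun q => fderiv ℝ Θ q (basisVec N j)) p (basisVec N i)

/-- The wavenumber `k = 1/∂_μΘ`. -/
def kfun (N : ℕ) (Θ : E N → ℝ) (p : E N) : ℝ := 1 / dmu N Θ p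

/-- The mean value `M = ∇_λΘ/∂_μΘ`. -/
def Mfun (N : ℕ) (Θ : E N → ℝ) (p : E N) : Fin N → ℝ :=
  (dmu N Θ p)⁻¹ • gradlam N Θ p

/-- The variable `α = ∂_cΘ − ∂_μΘ · Q(∇_λΘ/∂_μΘ)`. -/
def afun (N : ℕ) (B : Matrix (Fin N) (Fin N) ℝ) (Θ : E N → ℝ) (p : E N) : ℝ :=
  dc N Θ p - dmu N Θ p * Qimp N B (Mfun N Θ p)

/-- The map `Φ = (k, α, M)`. -/
def Phi (N : ℕ) (B : Matrix (Fin N) (Fin N) ℝ) (Θ : E N → ℝ) (p : E N) : E N :=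
  (kfun N Θ p, afun N B Θ p, Mfun N Θ p)

/-- `Φ` is a local diffeomorphism at `p`: it is smooth and injective on an open
neighborhood of `p`, its image is open, and it admits a smooth local inverse. -/
def IsLocalDiffeoAt (N : ℕ) (Φ : E N → E N) (p : E N) : Prop :=
  ∃ s : Set (E N), IsOpen s ∧ p ∈ s ∧ ContDiffOn ℝ (⊤ : ℕ∞) Φ s ∧ Set.InjOn Φ s ∧
    IsOpen (Φ '' s) ∧ ∃ Ψ : E N → E N, (∀ x ∈ s, Ψ (Φ x) = x) ∧
      ContDiffOn ℝ (⊤ : ℕ∞) Ψ (Φ '' s)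

end

noncomputable section

/-- The full gradient `∇Θ = (∂_μΘ, ∂_cΘ, ∇_λΘ)`. -/
def gradTheta (N : ℕ) (Θ : E N → ℝ) (p : E N) : E N :=
  (dmu N Θ p, dc N Θ p, gradlam N Θ p)

/-- The matrix `𝕊' = [[0,1,0],[1,0,0],[0,0,−B]]` acting on `ℝ × ℝ × ℝ^N`. -/
def Sprime (N : ℕ) (B : Matrix (Fin N) (Fin N) ℝ) (q : E N) : E N :=
  (q.2.1, q.1, -(B.mulVec q.2.2))

end

/-!
The material derivative `∂_T + c ∂_X` of a field `u ∘ P` is the differential of `u` applied to the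
phase-space vector `W := DP (c, 1)`, and `∂_X (u ∘ P)` is the differential of `u` applied to
`V := DP (1, 0)`. The modulated equations therefore say `D(∇Θ) W = ∂_μΘ • 𝕊' V`. Since `k`, `α` and
`M` are functions of `∇Θ`, their differentials at `W` follow from this relation alone:
`Dk W = -V_c k`, `DM W = -V_c M - B V_λ` and `Dα W = DΘ V - V_c α`. Each of these has the form
`Du W = Dφ V - V_c u`, which is the conservation law `∂_T u = ∂_X (φ - c u)`.
-/

section MaterialDerivative

variable {𝕜 F G : Type*} [NontriviallyNormedField 𝕜]
  [NormedAddCommGroup F] [NormedSpace 𝕜 F] [NormedAddCommGroup G] [NormedSpace 𝕜 G]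
  {P : 𝕜 × 𝕜 → G} {x t : 𝕜}

theorem hasDerivAt_comp_prodMk_left {u : G → F} {u' : G →L[𝕜] F}
    (hu : HasFDerivAt u u' (P (x, t))) (hP : DifferentiableAt 𝕜 P (x, t)) :
    HasDerivAt (fun s => u (P (s, t))) (u' (fderiv 𝕜 P (x, t) (1, 0))) x :=
  hu.comp_hasDerivAt x <|
    hP.hasFDerivAt.comp_hasDerivAt x ((hasDerivAt_id x).prodMk (hasDerivAt_const x t))

theorem hasDerivAt_comp_prodMk_right {u : G → F} {u' : G →L[𝕜] F}
    (hu : HasFDerivAt u u' (P (x, t))) (hP : DifferentiableAt 𝕜 P (x, t)) :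
    HasDerivAt (fun s => u (P (x, s))) (u' (fderiv 𝕜 P (x, t) (0, 1))) t :=
  hu.comp_hasDerivAt t <|
    hP.hasFDerivAt.comp_hasDerivAt t ((hasDerivAt_const t x).prodMk (hasDerivAt_id t))

theorem deriv_add_smul_deriv_eq_fderiv {u : G → F} (hu : DifferentiableAt 𝕜 u (P (x, t)))
    (hP : DifferentiableAt 𝕜 P (x, t)) (c : 𝕜) :
    deriv (fun s => u (P (x, s))) t + c • deriv (fun s => u (P (s, t))) x =
      fderiv 𝕜 u (P (x, t)) (fderiv 𝕜 P (x, t) (c, 1)) := by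
  have hsplit : ((c, 1) : 𝕜 × 𝕜) = (0, 1) + c • (1, 0) := by simp
  rw [(hasDerivAt_comp_prodMk_left hu.hasFDerivAt hP).deriv,
    (hasDerivAt_comp_prodMk_right hu.hasFDerivAt hP).deriv, hsplit]
  simp only [map_add, map_smul]

theorem deriv_eq_deriv_sub_smul_of_fderiv_eq {u φ : G → F} {c : G → 𝕜} {φ' : G →L[𝕜] F}
    {c' : G →L[𝕜] 𝕜} (hu : DifferentiableAt 𝕜 u (P (x, t))) (hφ : HasFDerivAt φ φ' (P (x, t)))
    (hc : HasFDerivAt c c' (P (x, t))) (hP : DifferentiableAt 𝕜 P (x, t))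
    (h : fderiv 𝕜 u (P (x, t)) (fderiv 𝕜 P (x, t) (c (P (x, t)), 1)) =
      φ' (fderiv 𝕜 P (x, t) (1, 0)) - c' (fderiv 𝕜 P (x, t) (1, 0)) • u (P (x, t))) :
    deriv (fun s => u (P (x, s))) t =
      deriv (fun s => φ (P (s, t)) - c (P (s, t)) • u (P (s, t))) x := by
  have hux := hasDerivAt_comp_prodMk_left hu.hasFDerivAt hP
  have hφx := hasDerivAt_comp_prodMk_left hφ hP
  have hcx := hasDerivAt_comp_prodMk_left hc hP
  rw [(hφx.fun_sub (hcx.fun_smul hux)).deriv, add_comm, ← sub_sub, ← h,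
    ← deriv_add_smul_deriv_eq_fderiv hu hP, hux.deriv, add_sub_cancel_right]

end MaterialDerivative

theorem hasFDerivAt_half_dotProduct_mulVec {n : Type*} [Fintype n] [DecidableEq n]
    {A : Matrix n n ℝ} (hA : A.IsSymm) (m : n → ℝ) :
    HasFDerivAt (fun m => (1 / 2) * (m ⬝ᵥ A *ᵥ m))
      ((toLinearMap₂' ℝ A).toContinuousBilinearMap m) m := by
  have hquad := ((toLinearMap₂' ℝ A).toContinuousBilinearMap.hasFDerivAt_of_bilinear
    (hasFDerivAt_id m) (hasFDerivAt_id m)).const_mul (1 / 2)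
  refine (hquad.congr_fderiv ?_).congr_of_eventuallyEq (.of_forall fun w => ?_)
  · ext w
    have hswap : w ⬝ᵥ A *ᵥ m = m ⬝ᵥ A *ᵥ w := by
      rw [dotProduct_comm, ← vecMul_transpose, hA.eq, dotProduct_mulVec]
    suffices (1 / 2) * (m ⬝ᵥ A *ᵥ w + w ⬝ᵥ A *ᵥ m) = m ⬝ᵥ A *ᵥ w by
      simpa [toLinearMap₂'_apply', mul_add] using this
    rw [hswap]
    ring
  · simp [toLinearMap₂'_apply']

section Fields

variable {N : ℕ} {B : Matrix (Fin N) (Fin N) ℝ} {Θ : E N → ℝ} {p V W : E N}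

theorem fderiv_apply_eq_gradTheta (v : E N) :
    fderiv ℝ Θ p v = dmu N Θ p * v.1 + dc N Θ p * v.2.1 + gradlam N Θ p ⬝ᵥ v.2.2 := by
  have hv : v = v.1 • (1, 0, 0) + v.2.1 • (0, 1, 0) +
      ∑ i, v.2.2 i • ((0, 0, Pi.single i 1) : E N) := by
    ext j <;> simp [Prod.fst_sum, Prod.snd_sum, Finset.sum_apply, Pi.single_apply]
  conv_lhs => rw [hv]
  simp only [map_add, map_sum, map_smul, smul_eq_mul, dmu, dc, gradlam, dotProduct, mul_comm]

theorem differentiableAt_gradTheta (hΘ : ContDiffAt ℝ 2 Θ p) :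
    DifferentiableAt ℝ (gradTheta N Θ) p := by
  have hD : DifferentiableAt ℝ (fderiv ℝ Θ) p :=
    (hΘ.fderiv_right (m := 1) (by norm_num)).differentiableAt one_ne_zero
  have hpartial (v : E N) : DifferentiableAt ℝ (fun q => fderiv ℝ Θ q v) p :=
    hD.clm_apply (differentiableAt_const v)
  exact (hpartial _).prodMk ((hpartial _).prodMk (differentiableAt_pi.2 fun i => hpartial _))

theorem hasFDerivAt_Qimp (hB : B.IsSymm) (m : Fin N → ℝ) :
    HasFDerivAt (Qimp N B) ((toLinearMap₂' ℝ B⁻¹).toContinuousBilinearMap m) m :=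
  hasFDerivAt_half_dotProduct_mulVec hB.inv m

theorem kfun_mul_dmu (hμ : dmu N Θ p ≠ 0) : kfun N Θ p * dmu N Θ p = 1 :=
  one_div_mul_cancel hμ

theorem Mfun_eq_kfun_smul : Mfun N Θ = fun q => kfun N Θ q • gradlam N Θ q := by
  simp only [funext_iff, Mfun, kfun, one_div, implies_true]

theorem dmu_smul_Mfun (hμ : dmu N Θ p ≠ 0) : dmu N Θ p • Mfun N Θ p = gradlam N Θ p :=
  smul_inv_smul₀ hμ _

theorem hasFDerivAt_kfun (hG : DifferentiableAt ℝ (gradTheta N Θ) p) (hμ : dmu N Θ p ≠ 0) :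
    HasFDerivAt (kfun N Θ)
      (-kfun N Θ p ^ 2 • (.fst ℝ ℝ (ℝ × (Fin N → ℝ)) ∘L fderiv ℝ (gradTheta N Θ) p)) p := by
  have hk : kfun N Θ = Inv.inv ∘ dmu N Θ := funext fun _ => one_div _
  rw [hk, Function.comp_apply, inv_pow]
  exact (hasDerivAt_inv hμ).comp_hasFDerivAt p hG.hasFDerivAt.fst

theorem hasFDerivAt_Mfun (hG : DifferentiableAt ℝ (gradTheta N Θ) p) (hμ : dmu N Θ p ≠ 0) :
    HasFDerivAt (Mfun N Θ)
      (kfun N Θ p • (.snd ℝ ℝ (Fin N → ℝ) ∘L .snd ℝ ℝ (ℝ × (Fin N → ℝ)) ∘L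
          fderiv ℝ (gradTheta N Θ) p) +
        (fderiv ℝ (kfun N Θ) p).smulRight (gradlam N Θ p)) p := by
  rw [Mfun_eq_kfun_smul]
  exact (hasFDerivAt_kfun hG hμ).differentiableAt.hasFDerivAt.fun_smul hG.hasFDerivAt.snd.snd

theorem hasFDerivAt_afun (hB : B.IsSymm) (hG : DifferentiableAt ℝ (gradTheta N Θ) p)
    (hμ : dmu N Θ p ≠ 0) :
    HasFDerivAt (afun N B Θ)
      (.fst ℝ ℝ (Fin N → ℝ) ∘L .snd ℝ ℝ (ℝ × (Fin N → ℝ)) ∘L fderiv ℝ (gradTheta N Θ) p -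
        (dmu N Θ p • ((toLinearMap₂' ℝ B⁻¹).toContinuousBilinearMap (Mfun N Θ p) ∘L
            fderiv ℝ (Mfun N Θ) p) +
          Qimp N B (Mfun N Θ p) •
            (.fst ℝ ℝ (ℝ × (Fin N → ℝ)) ∘L fderiv ℝ (gradTheta N Θ) p))) p :=
  hG.hasFDerivAt.snd.fst.sub <| hG.hasFDerivAt.fst.mul <|
    (hasFDerivAt_Qimp hB _).comp p (hasFDerivAt_Mfun hG hμ).differentiableAt.hasFDerivAt

theorem fderiv_kfun_of_transport (hG : DifferentiableAt ℝ (gradTheta N Θ) p)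
    (hμ : dmu N Θ p ≠ 0) (hW : fderiv ℝ (gradTheta N Θ) p W = dmu N Θ p • Sprime N B V) :
    fderiv ℝ (kfun N Θ) p W = -(V.2.1 * kfun N Θ p) :=
  calc fderiv ℝ (kfun N Θ) p W
      = -kfun N Θ p ^ 2 * (fderiv ℝ (gradTheta N Θ) p W).1 := by
        rw [(hasFDerivAt_kfun hG hμ).fderiv]; rfl
    _ = -kfun N Θ p ^ 2 * (dmu N Θ p * V.2.1) := by
        rw [hW]; rfl
    _ = -(V.2.1 * kfun N Θ p) := by
        linear_combination -V.2.1 * kfun N Θ p * kfun_mul_dmu hμ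

theorem fderiv_Mfun_of_transport (hG : DifferentiableAt ℝ (gradTheta N Θ) p)
    (hμ : dmu N Θ p ≠ 0) (hW : fderiv ℝ (gradTheta N Θ) p W = dmu N Θ p • Sprime N B V) :
    fderiv ℝ (Mfun N Θ) p W = -(B *ᵥ V.2.2) - V.2.1 • Mfun N Θ p :=
  calc fderiv ℝ (Mfun N Θ) p W
      = kfun N Θ p • (fderiv ℝ (gradTheta N Θ) p W).2.2 +
          fderiv ℝ (kfun N Θ) p W • gradlam N Θ p := by
        rw [(hasFDerivAt_Mfun hG hμ).fderiv]; rfl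
    _ = kfun N Θ p • dmu N Θ p • -(B *ᵥ V.2.2) +
          -(V.2.1 * kfun N Θ p) • gradlam N Θ p := by
        rw [fderiv_kfun_of_transport hG hμ hW, hW]; rfl
    _ = -(B *ᵥ V.2.2) - V.2.1 • Mfun N Θ p := by
        rw [smul_smul, kfun_mul_dmu hμ, one_smul, neg_smul, mul_smul, Mfun_eq_kfun_smul,
          sub_eq_add_neg]

theorem fderiv_afun_of_transport (hBsymm : B.IsSymm) (hBinv : IsUnit B.det)
    (hG : DifferentiableAt ℝ (gradTheta N Θ) p) (hμ : dmu N Θ p ≠ 0)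
    (hW : fderiv ℝ (gradTheta N Θ) p W = dmu N Θ p • Sprime N B V) :
    fderiv ℝ (afun N B Θ) p W = fderiv ℝ Θ p V - V.2.1 * afun N B Θ p := by
  have himpulse : Mfun N Θ p ⬝ᵥ B⁻¹ *ᵥ fderiv ℝ (Mfun N Θ) p W =
      -(Mfun N Θ p ⬝ᵥ V.2.2) - 2 * V.2.1 * Qimp N B (Mfun N Θ p) := by
    rw [fderiv_Mfun_of_transport hG hμ hW, mulVec_sub, mulVec_neg, mulVec_mulVec,
      nonsing_inv_mul _ hBinv, one_mulVec, mulVec_smul, dotProduct_sub, dotProduct_neg,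
      dotProduct_smul, Qimp, smul_eq_mul]
    ring
  calc fderiv ℝ (afun N B Θ) p W
      = (fderiv ℝ (gradTheta N Θ) p W).2.1 -
          (dmu N Θ p * (Mfun N Θ p ⬝ᵥ B⁻¹ *ᵥ fderiv ℝ (Mfun N Θ) p W) +
            Qimp N B (Mfun N Θ p) * (fderiv ℝ (gradTheta N Θ) p W).1) := by
        rw [(hasFDerivAt_afun hBsymm hG hμ).fderiv, ← toLinearMap₂'_apply']; rfl
    _ = dmu N Θ p * V.1 -
          (dmu N Θ p * (-(Mfun N Θ p ⬝ᵥ V.2.2) - 2 * V.2.1 * Qimp N B (Mfun N Θ p)) +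
            Qimp N B (Mfun N Θ p) * (dmu N Θ p * V.2.1)) := by
        rw [himpulse, hW]; rfl
    _ = dmu N Θ p * V.1 + dc N Θ p * V.2.1 + (dmu N Θ p • Mfun N Θ p) ⬝ᵥ V.2.2 -
          V.2.1 * afun N B Θ p := by
        rw [smul_dotProduct, smul_eq_mul, afun]
        ring
    _ = fderiv ℝ Θ p V - V.2.1 * afun N B Θ p := by
        rw [dmu_smul_Mfun hμ, fderiv_apply_eq_gradTheta]

end Fields

theorem stmt7_general {N : ℕ} {B : Matrix (Fin N) (Fin N) ℝ} (hBsymm : B.IsSymm)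
    (hBinv : IsUnit B.det) {Θ : E N → ℝ} {P : ℝ × ℝ → E N} {X T : ℝ}
    (hΘ : ContDiffAt ℝ 2 Θ (P (X, T))) (hμ : dmu N Θ (P (X, T)) ≠ 0)
    (hP : DifferentiableAt ℝ P (X, T))
    (heq : deriv (fun t => gradTheta N Θ (P (X, t))) T
        + (P (X, T)).2.1 • deriv (fun x => gradTheta N Θ (P (x, T))) X
      = dmu N Θ (P (X, T)) • Sprime N B (deriv (fun x => P (x, T)) X)) :
    deriv (fun t => kfun N Θ (P (X, t))) T
        = -deriv (fun x => kfun N Θ (P (x, T)) * (P (x, T)).2.1) X ∧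
      deriv (fun t => afun N B Θ (P (X, t))) T
        = deriv (fun x => Θ (P (x, T)) - afun N B Θ (P (x, T)) * (P (x, T)).2.1) X ∧
      deriv (fun t => Mfun N Θ (P (X, t))) T
        = -deriv (fun x =>
            (P (x, T)).2.1 • Mfun N Θ (P (x, T)) + B.mulVec (P (x, T)).2.2) X := by
  have hG := differentiableAt_gradTheta hΘ
  have hV : deriv (fun x => P (x, T)) X = fderiv ℝ P (X, T) (1, 0) :=
    (hasDerivAt_comp_prodMk_left (hasFDerivAt_id _) hP).deriv
  have hW : fderiv ℝ (gradTheta N Θ) (P (X, T)) (fderiv ℝ P (X, T) ((P (X, T)).2.1, 1)) =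
      dmu N Θ (P (X, T)) • Sprime N B (fderiv ℝ P (X, T) (1, 0)) := by
    rw [← deriv_add_smul_deriv_eq_fderiv hG hP, heq, hV]
  have hc : HasFDerivAt (fun p : E N => p.2.1) _ (P (X, T)) :=
    (ContinuousLinearMap.fst ℝ ℝ (Fin N → ℝ) ∘L .snd ℝ ℝ (ℝ × (Fin N → ℝ))).hasFDerivAt
  have hBl : HasFDerivAt (fun p : E N => -(B *ᵥ p.2.2)) _ (P (X, T)) :=
    (B.mulVecLin.toContinuousLinearMap ∘L .snd ℝ ℝ (Fin N → ℝ) ∘L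
      .snd ℝ ℝ (ℝ × (Fin N → ℝ))).hasFDerivAt.fun_neg
  have hk := deriv_eq_deriv_sub_smul_of_fderiv_eq (hasFDerivAt_kfun hG hμ).differentiableAt
    (hasFDerivAt_const 0 _) hc hP (by simpa using fderiv_kfun_of_transport hG hμ hW)
  have hα := deriv_eq_deriv_sub_smul_of_fderiv_eq
    (hasFDerivAt_afun hBsymm hG hμ).differentiableAt
    (hΘ.differentiableAt two_ne_zero).hasFDerivAt hc hP
    (fderiv_afun_of_transport hBsymm hBinv hG hμ hW)
  have hM := deriv_eq_deriv_sub_smul_of_fderiv_eq (hasFDerivAt_Mfun hG hμ).differentiableAt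
    hBl hc hP (fderiv_Mfun_of_transport hG hμ hW)
  refine ⟨?_, ?_, ?_⟩
  · simpa only [zero_sub, smul_eq_mul, mul_comm, deriv.fun_neg] using hk
  · simpa only [smul_eq_mul, mul_comm] using hα
  · simpa only [← neg_add', add_comm, deriv.fun_neg] using hM

/-- if `det ∇²Θ ≠ 0` on `Ω` and `(μ,c,λ) : ℝ² → Ω` is a `C¹` solution
of the modulated equations in parameter form
`(∂_T + c ∂_X)(∇Θ ∘ (μ,c,λ)) = (∂_μΘ ∘ (μ,c,λ)) 𝕊' ∂_X(μ,c,λ)`,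
then the fields `k, α, M` satisfy the conservation laws
`∂_T k = −∂_X(k c)`, `∂_T α = ∂_X(Θ − α c)`, `∂_T M = −∂_X(c M + B λ)`. -/
theorem stmt7 (N : ℕ) (hN : 1 ≤ N) (B : Matrix (Fin N) (Fin N) ℝ)
    (hBsymm : B.IsSymm) (hBinv : IsUnit B.det)
    (Ω : Set (E N)) (hΩ : IsOpen Ω)
    (Θ : E N → ℝ) (hΘ : ContDiffOn ℝ (⊤ : ℕ∞) Θ Ω)
    (hμpos : ∀ p ∈ Ω, 0 < dmu N Θ p)
    (hdet : ∀ p ∈ Ω, (hessMat N Θ p).det ≠ 0)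
    (P : ℝ × ℝ → E N) (hP : ContDiff ℝ 1 P) (hmem : ∀ q : ℝ × ℝ, P q ∈ Ω)
    (heq : ∀ X T : ℝ,
      deriv (fun t => gradTheta N Θ (P (X, t))) T
        + (P (X, T)).2.1 • deriv (fun x => gradTheta N Θ (P (x, T))) X
      = dmu N Θ (P (X, T)) • Sprime N B (deriv (fun x => P (x, T)) X)) :
    ∀ X T : ℝ,
      deriv (fun t => kfun N Θ (P (X, t))) T
        = -deriv (fun x => kfun N Θ (P (x, T)) * (P (x, T)).2.1) X ∧
      deriv (fun t => afun N B Θ (P (X, t))) T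
        = deriv (fun x => Θ (P (x, T)) - afun N B Θ (P (x, T)) * (P (x, T)).2.1) X ∧
      deriv (fun t => Mfun N Θ (P (X, t))) T
        = -deriv (fun x =>
            (P (x, T)).2.1 • Mfun N Θ (P (x, T)) + B.mulVec (P (x, T)).2.2) X := fun X T =>
  stmt7_general hBsymm hBinv
    ((hΘ.contDiffAt (hΩ.mem_nhds (hmem _))).of_le (WithTop.coe_le_coe.2 le_top))
    (hμpos _ (hmem _)).ne' (hP.differentiable one_ne_zero _) (heq X T)
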